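/- Let ζ ∈ (-1/2, ∞), α ∈ (0,2), and c > 0. Then there exist constants K₁, K₂ > 0 (depending only on ζ, α, c) such that for all τ, z, s > 0: K₁ · p_ζ^{(α)}(τ,z,s) ≤ p_ζ^{(α)}(τ, cz, cs) ≤ K₂ · p_ζ^{(α)}(τ,z,s), and likewise K₁ · p_ζ^{(α)}(τ,z,s) ≤ p_ζ^{(α)}(cτ, z, s) ≤ K₂ · p_ζ^{(α)}(τ,z,s). -/

import Mathlib

open MeasureTheory Real Set Filter

/-- Modified Bessel function of the first kind of order `ν`. -/
noncomputable def besselI (ν x : ℝ) : ℝ :=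
  ∑' k : ℕ, (x / 2) ^ (2 * (k : ℝ) + ν) / ((Nat.factorial k : ℝ) * Real.Gamma ((k : ℝ) + ν + 1))

/-- The Bessel heat kernel `p_ζ^{(2)}(t,r,s)`. -/
noncomputable def besselHeat (ζ t r s : ℝ) : ℝ :=
  (r * s) ^ ((1 : ℝ) / 2 - ζ) / (2 * t) * Real.exp (-(r ^ 2 + s ^ 2) / (4 * t)) *
    besselI (ζ - 1 / 2) (r * s / (2 * t))

/-- `σ` is a family of `α/2`-stable subordinator densities. -/
def IsStableSubordinatorDensity (α : ℝ) (σ : ℝ → ℝ → ℝ) : Prop :=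
  (∀ t, 0 < t → ∀ τ, 0 < τ → 0 ≤ σ t τ) ∧
  (∀ t, 0 < t → Measurable (σ t)) ∧
  (∀ t l : ℝ, 0 < t → 0 ≤ l →
    (∫ τ in Ioi (0 : ℝ), Real.exp (-τ * l) * σ t τ) = Real.exp (-t * l ^ (α / 2)))

/-- The `α/2`-subordinated Bessel heat kernel `p_ζ^{(α)}(t,r,s)`. -/
noncomputable def subKernel (ζ : ℝ) (σ : ℝ → ℝ → ℝ) (t r s : ℝ) : ℝ :=
  ∫ τ in Ioi (0 : ℝ), besselHeat ζ τ r s * σ t τ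

/-- The entire function `∑ yᵏ / (k! Γ(k + a))`, of which `I_{a-1}` is a rescaling. -/
noncomputable def besselSeries (a y : ℝ) : ℝ :=
  ∑' k : ℕ, y ^ k / ((Nat.factorial k : ℝ) * Real.Gamma (k + a))

theorem pow_mul_Gamma_le_Gamma_nat_add {a : ℝ} (ha : 0 < a) (k : ℕ) :
    a ^ k * Real.Gamma a ≤ Real.Gamma (k + a) := by
  induction k with
  | zero => simp
  | succ k ih =>
    have h0 : (0 : ℝ) ≤ k := k.cast_nonneg
    have h : Real.Gamma ((k + 1 : ℕ) + a) = (k + a) * Real.Gamma (k + a) := by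
      rw [← Real.Gamma_add_one (by positivity)]; push_cast; ring_nf
    rw [h, pow_succ']
    have : 0 < Real.Gamma a := Real.Gamma_pos_of_pos ha
    calc a * a ^ k * Real.Gamma a = a * (a ^ k * Real.Gamma a) := by ring
      _ ≤ (k + a) * Real.Gamma (k + a) := by gcongr; linarith

theorem besselSeries_summable {a : ℝ} (ha : 0 < a) (y : ℝ) :
    Summable fun k : ℕ => y ^ k / ((Nat.factorial k : ℝ) * Real.Gamma (k + a)) := by
  have hG : 0 < Real.Gamma a := Real.Gamma_pos_of_pos ha
  refine Summable.of_norm_bounded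
    (g := fun k : ℕ => (|y| / a) ^ k / (Nat.factorial k : ℝ) * (Real.Gamma a)⁻¹)
    ((Real.summable_pow_div_factorial _).mul_right _) fun k => ?_
  have hk := pow_mul_Gamma_le_Gamma_nat_add ha k
  have hp : 0 < a ^ k * Real.Gamma a := by positivity
  rw [norm_div, norm_pow, Real.norm_eq_abs, norm_mul, Real.norm_eq_abs, Real.norm_eq_abs,
    abs_of_pos (hp.trans_le hk), Nat.abs_cast, div_pow]
  calc |y| ^ k / ((Nat.factorial k : ℝ) * Real.Gamma (k + a))
      ≤ |y| ^ k / ((Nat.factorial k : ℝ) * (a ^ k * Real.Gamma a)) := by gcongr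
    _ = _ := by field_simp

theorem besselSeries_pos {a y : ℝ} (ha : 0 < a) (hy : 0 ≤ y) : 0 < besselSeries a y := by
  refine (besselSeries_summable ha y).tsum_pos (fun k => ?_) 0 ?_
  · have := Real.Gamma_pos_of_pos (s := k + a) (by positivity)
    positivity
  · have := Real.Gamma_pos_of_pos ha
    simpa

theorem besselSeries_deriv_term {a : ℝ} (ha : 0 < a) (y : ℝ) (k : ℕ) :
    ((k + 1 : ℕ) : ℝ) * y ^ k / ((Nat.factorial (k + 1) : ℝ) * Real.Gamma ((k + 1 : ℕ) + a)) =
      y ^ k / ((Nat.factorial k : ℝ) * Real.Gamma (k + (a + 1))) := by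
  have := (Real.Gamma_pos_of_pos (s := k + (a + 1)) (by positivity)).ne'
  rw [Nat.factorial_succ, show ((k + 1 : ℕ) : ℝ) + a = k + (a + 1) by push_cast; ring]
  push_cast
  field_simp

theorem besselSeries_hasDerivAt {a : ℝ} (ha : 0 < a) (y : ℝ) :
    HasDerivAt (besselSeries a) (besselSeries (a + 1) y) y := by
  have hS (x : ℝ) : Summable fun k : ℕ =>
      (k : ℝ) * x ^ (k - 1) / ((Nat.factorial k : ℝ) * Real.Gamma (k + a)) := by
    rw [← summable_nat_add_iff 1]
    refine (besselSeries_summable (by positivity : 0 < a + 1) x).congr fun k => ?_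
    exact (besselSeries_deriv_term ha x k).symm
  have h := hasDerivAt_tsum_of_isPreconnected (hS (|y| + 1)) (Metric.isOpen_ball)
    (convex_ball (0 : ℝ) (|y| + 1)).isPreconnected
    (g := fun (k : ℕ) x => x ^ k / ((Nat.factorial k : ℝ) * Real.Gamma (k + a)))
    (g' := fun (k : ℕ) x =>
      (k : ℝ) * x ^ (k - 1) / ((Nat.factorial k : ℝ) * Real.Gamma (k + a)))
    (y₀ := 0) (y := y) (fun k x _ => (hasDerivAt_pow k x).div_const _)
    (fun k x hx => ?_) (by simp; positivity) (besselSeries_summable ha 0) (by simp)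
  · refine h.congr_deriv ?_
    rw [(hS y).tsum_eq_zero_add]
    simp only [Nat.cast_zero, zero_mul, zero_div, zero_add]
    exact tsum_congr (besselSeries_deriv_term ha y)
  · have hx' : |x| ≤ |y| + 1 := by simpa using (mem_ball_zero_iff.1 hx).le
    have := Real.Gamma_pos_of_pos (s := k + a) (by positivity)
    rw [norm_div, norm_mul, norm_pow, Real.norm_eq_abs, Real.norm_eq_abs, Real.norm_eq_abs,
      abs_of_pos (by positivity : 0 < (Nat.factorial k : ℝ) * Real.Gamma (k + a)),
      Nat.abs_cast]
    gcongr

/-- The three-term recurrence. -/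
theorem besselSeries_recurrence {a : ℝ} (ha : 0 < a) (y : ℝ) :
    besselSeries a y = a * besselSeries (a + 1) y + y * besselSeries (a + 2) y := by
  have h1 := besselSeries_summable (by positivity : 0 < a + 1) y
  have h2 := besselSeries_summable (by positivity : 0 < a + 2) y
  have hG := (Real.Gamma_pos_of_pos ha).ne'
  unfold besselSeries
  rw [(besselSeries_summable ha y).tsum_eq_zero_add, h1.tsum_eq_zero_add, mul_add, add_assoc,
    ← tsum_mul_left, ← tsum_mul_left,
    ← (((summable_nat_add_iff 1).mpr h1).mul_left a).tsum_add (h2.mul_left y)]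
  congr 1
  · simp [Real.Gamma_add_one ha.ne']
    field_simp
  · refine tsum_congr fun k => ?_
    have hp : 0 < (k : ℝ) + 1 + a := by positivity
    have hG' := (Real.Gamma_pos_of_pos hp).ne'
    rw [Nat.factorial_succ, show (k : ℝ) + (a + 2) = (k + 1 + a) + 1 by ring,
      show ((k + 1 : ℕ) : ℝ) + (a + 1) = (k + 1 + a) + 1 by push_cast; ring,
      Real.Gamma_add_one hp.ne']
    push_cast
    field_simp
    ring

/-- A Turán-type inequality: `besselSeries a` is log-concave on `(0, ∞)`. -/
theorem besselSeries_turan {a y : ℝ} (ha : 0 < a) (hy : 0 < y) :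
    y * besselSeries a y ^ 2 ≤ (y * besselSeries (a + 1) y) ^ 2 +
      a * (y * besselSeries (a + 1) y) * besselSeries a y := by
  set G : ℝ → ℝ := fun x => x ^ a * (x * besselSeries (a + 1) x ^ 2 - besselSeries a x ^ 2 +
    a * besselSeries a x * besselSeries (a + 1) x) with hGdef
  have hd (x : ℝ) : HasDerivAt (besselSeries a) (besselSeries (a + 1) x) x :=
    besselSeries_hasDerivAt ha x
  have hd' (x : ℝ) : HasDerivAt (besselSeries (a + 1)) (besselSeries (a + 2) x) x := by
    convert besselSeries_hasDerivAt (by positivity : 0 < a + 1) x using 2; ring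
  have hc : Continuous (besselSeries a) :=
    continuous_iff_continuousAt.2 fun x => (hd x).continuousAt
  have hc' : Continuous (besselSeries (a + 1)) :=
    continuous_iff_continuousAt.2 fun x => (hd' x).continuousAt
  have hGc : ContinuousOn G (Ici 0) := by
    refine Continuous.continuousOn ?_
    have := Real.continuous_rpow_const ha.le
    fun_prop
  have hG' : ∀ x ∈ interior (Ici (0 : ℝ)),
      HasDerivWithinAt G (x ^ a * besselSeries (a + 1) x ^ 2) (interior (Ici 0)) x := by
    intro x hx
    rw [interior_Ici, mem_Ioi] at hx
    refine HasDerivAt.hasDerivWithinAt ?_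
    refine ((Real.hasDerivAt_rpow_const (p := a) (Or.inl hx.ne')).mul
      ((((hasDerivAt_id x).mul ((hd' x).pow 2)).sub ((hd x).pow 2)).add
      (((hd x).const_mul a).mul (hd' x)))).congr_deriv ?_
    have h := besselSeries_recurrence ha x
    rw [Real.rpow_sub_one hx.ne']
    simp only [Pi.mul_apply, Pi.pow_apply, Pi.sub_apply, Pi.add_apply, id]
    have h2 : besselSeries (a + 2) x = (besselSeries a x - a * besselSeries (a + 1) x) / x := by
      rw [h]; field_simp; ring
    rw [h2]
    field_simp
    ring
  have hmono : MonotoneOn G (Ici 0) :=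
    monotoneOn_of_hasDerivWithinAt_nonneg (convex_Ici 0) hGc hG' fun x hx => by
      rw [interior_Ici, mem_Ioi] at hx; positivity
  have h0 := hmono self_mem_Ici hy.le hy.le
  simp only [hGdef, Real.zero_rpow ha.ne', zero_mul] at h0
  have h1 := nonneg_of_mul_nonneg_right h0 (by positivity)
  nlinarith [mul_nonneg hy.le h1]

theorem besselSeries_logDeriv_lower {a s : ℝ} (ha : 0 < a) (hs : 0 < s) :
    0 ≤ (a - 2 * s) * besselSeries a (s ^ 2) + 2 * (s ^ 2 * besselSeries (a + 1) (s ^ 2)) := by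
  have h := besselSeries_turan ha (pow_pos hs 2)
  have h0 := besselSeries_pos ha (pow_pos hs 2).le
  have h1 := besselSeries_pos (by positivity : 0 < a + 1) (pow_pos hs 2).le
  set F := besselSeries a (s ^ 2)
  have hT : 0 < s ^ 2 * besselSeries (a + 1) (s ^ 2) := by positivity
  set T := s ^ 2 * besselSeries (a + 1) (s ^ 2)
  by_contra! hlt
  nlinarith [mul_pos ha h0, mul_pos hs h0]

theorem besselSeries_logDeriv_upper {a s : ℝ} (ha : 0 < a) (hs : 0 < s) :
    s ^ 2 * besselSeries (a + 1) (s ^ 2) ≤ (s + (1 / a + 1)) * besselSeries a (s ^ 2) := by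
  have h := besselSeries_recurrence ha (s ^ 2)
  have hl := besselSeries_logDeriv_lower (by positivity : 0 < a + 1) hs
  rw [show a + 1 + 1 = a + 2 by ring] at hl
  have h0 := besselSeries_pos ha (pow_pos hs 2).le
  have h1 := besselSeries_pos (by positivity : 0 < a + 1) (pow_pos hs 2).le
  have h2 := besselSeries_pos (by positivity : 0 < a + 2) (pow_pos hs 2).le
  set F := besselSeries a (s ^ 2)
  set F₁ := besselSeries (a + 1) (s ^ 2)
  set T := s ^ 2 * besselSeries (a + 2) (s ^ 2)
  have hT : 0 < T := by positivity
  rcases le_total s 1 with hs1 | hs1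
  · have h3 : s ^ 2 * F₁ ≤ F₁ := mul_le_of_le_one_left h1.le (pow_le_one₀ hs.le hs1)
    have h4 : F₁ ≤ 1 / a * F := by
      rw [h]; field_simp; nlinarith
    nlinarith [mul_pos hs h0]
  · have h3 : (s - 1 / 2) * F₁ ≤ F := by nlinarith
    have h4 : s ^ 2 * F₁ ≤ (s + 1) * F := by nlinarith
    have : 0 < 1 / a * F := by positivity
    nlinarith

/-- `x ^ (e - a + 1) e ^ (-x) I_{a-1}(x)` in the variable `s = x / 2`, up to a constant. -/
noncomputable def scaledBessel (a e s : ℝ) : ℝ :=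
  s ^ e * (Real.exp (-(2 * s)) * besselSeries a (s ^ 2))

theorem scaledBessel_hasDerivAt {a s : ℝ} (ha : 0 < a) (e : ℝ) (hs : 0 < s) :
    HasDerivAt (scaledBessel a e) (s ^ (e - 1) * Real.exp (-(2 * s)) *
      ((e - 2 * s) * besselSeries a (s ^ 2) + 2 * (s ^ 2 * besselSeries (a + 1) (s ^ 2)))) s := by
  have h1 : HasDerivAt (fun s : ℝ => Real.exp (-(2 * s))) (Real.exp (-(2 * s)) * (-(2 * 1))) s :=
    ((hasDerivAt_id s).const_mul 2).neg.exp
  have h2 : HasDerivAt (fun s : ℝ => besselSeries a (s ^ 2))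
      (besselSeries (a + 1) (s ^ 2) * (2 * s)) s := by
    refine ((besselSeries_hasDerivAt ha (s ^ 2)).comp s (hasDerivAt_pow 2 s)).congr_deriv ?_
    simp
  refine ((Real.hasDerivAt_rpow_const (p := e) (Or.inl hs.ne')).mul (h1.mul h2)).congr_deriv ?_
  rw [Real.rpow_sub_one hs.ne']
  simp only [Pi.mul_apply]
  field_simp
  ring

theorem scaledBessel_pos {a s : ℝ} (ha : 0 < a) (e : ℝ) (hs : 0 < s) : 0 < scaledBessel a e s := by
  have := besselSeries_pos ha (pow_pos hs 2).le
  unfold scaledBessel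
  positivity

theorem scaledBessel_monotoneOn {a : ℝ} (ha : 0 < a) : MonotoneOn (scaledBessel a a) (Ioi 0) := by
  refine monotoneOn_of_hasDerivWithinAt_nonneg (convex_Ioi 0)
    (fun s hs => (scaledBessel_hasDerivAt ha a hs).continuousAt.continuousWithinAt)
    (fun s hs => (scaledBessel_hasDerivAt ha a (interior_subset hs)).hasDerivWithinAt)
    fun s hs => ?_
  have hs : 0 < s := interior_subset hs
  exact mul_nonneg (by positivity) (besselSeries_logDeriv_lower ha hs)

theorem scaledBessel_antitoneOn {a : ℝ} (ha : 0 < a) :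
    AntitoneOn (scaledBessel a (-(2 * (1 / a + 1)))) (Ioi 0) := by
  refine antitoneOn_of_hasDerivWithinAt_nonpos (convex_Ioi 0)
    (fun s hs => (scaledBessel_hasDerivAt ha _ hs).continuousAt.continuousWithinAt)
    (fun s hs => (scaledBessel_hasDerivAt ha _ (interior_subset hs)).hasDerivWithinAt)
    fun s hs => ?_
  have hs : 0 < s := interior_subset hs
  exact mul_nonpos_of_nonneg_of_nonpos (by positivity)
    (by linarith [besselSeries_logDeriv_upper ha hs])

/-- `ρ` is the density of the `β`-stable subordinator at time `τ`. -/
def IsStableDensity (β τ : ℝ) (ρ : ℝ → ℝ) : Prop :=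
  (∀ t, 0 < t → 0 ≤ ρ t) ∧ Measurable ρ ∧
  ∀ l, 0 ≤ l → ∫ t in Ioi (0 : ℝ), Real.exp (-t * l) * ρ t = Real.exp (-τ * l ^ β)

namespace IsStableDensity

variable {β τ : ℝ} {ρ : ℝ → ℝ}

theorem integrableOn_exp (h : IsStableDensity β τ ρ) {l : ℝ} (hl : 0 ≤ l) :
    IntegrableOn (fun t => Real.exp (-t * l) * ρ t) (Ioi 0) :=
  Integrable.of_integral_ne_zero (by rw [h.2.2 l hl]; exact (Real.exp_pos _).ne')

theorem integrableOn (h : IsStableDensity β τ ρ) : IntegrableOn ρ (Ioi 0) := by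
  simpa using h.integrableOn_exp le_rfl

theorem integral_eq_one (h : IsStableDensity β τ ρ) (hβ : 0 < β) :
    ∫ t in Ioi (0 : ℝ), ρ t = 1 := by
  simpa [Real.zero_rpow hβ.ne'] using h.2.2 0 le_rfl

theorem integrableOn_one_sub_exp (h : IsStableDensity β τ ρ) {R : ℝ} (hR : 0 < R) :
    IntegrableOn (fun t => (1 - Real.exp (-(t / R))) * ρ t) (Ioi 0) := by
  refine (h.integrableOn.sub (h.integrableOn_exp (inv_pos.2 hR).le)).congr
    (Eventually.of_forall fun t => ?_)
  simp only [Pi.sub_apply, div_eq_mul_inv]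
  ring_nf

theorem integral_one_sub_exp (h : IsStableDensity β τ ρ) (hβ : 0 < β) {R : ℝ} (hR : 0 < R) :
    ∫ t in Ioi (0 : ℝ), (1 - Real.exp (-(t / R))) * ρ t = 1 - Real.exp (-(τ * R ^ (-β))) := by
  have h1 := integral_sub h.integrableOn (h.integrableOn_exp (inv_pos.2 hR).le)
  rw [h.integral_eq_one hβ, h.2.2 _ (inv_pos.2 hR).le, Real.inv_rpow hR.le,
    ← Real.rpow_neg hR.le, neg_mul] at h1
  rw [← h1]
  congr 1 with t
  rw [div_eq_mul_inv]
  ring_nf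

theorem integrable_prod (h : IsStableDensity β τ ρ) (hβ : 0 < β) (hτ : 0 < τ) {Q : ℝ}
    (hQ : 0 < Q) :
    Integrable (Function.uncurry fun t l : ℝ => l ^ (Q - 1) * (Real.exp (-t * l) * ρ t))
      ((volume.restrict (Ioi 0)).prod (volume.restrict (Ioi 0))) := by
  have hm : Measurable ρ := h.2.1
  rw [integrable_prod_iff' (by
    refine Measurable.aestronglyMeasurable ?_
    unfold Function.uncurry
    fun_prop)]
  constructor
  · filter_upwards [ae_restrict_mem measurableSet_Ioi] with l hl
    exact (h.integrableOn_exp (le_of_lt hl)).const_mul (l ^ (Q - 1))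
  · refine (integrableOn_rpow_mul_exp_neg_mul_rpow (s := Q - 1) (by linarith) hβ hτ).congr ?_
    filter_upwards [ae_restrict_mem measurableSet_Ioi] with l hl
    have hl : 0 < l := hl
    rw [← h.2.2 l hl.le, ← integral_const_mul]
    refine setIntegral_congr_fun measurableSet_Ioi fun t ht => ?_
    have h0 := h.1 t ht
    simp only [Function.uncurry]
    rw [Real.norm_of_nonneg (by positivity)]

theorem integral_rpow_mul_exp_neg_mul (Q : ℝ) (hQ : 0 < Q) {t : ℝ} (ht : 0 < t) :
    ∫ l in Ioi (0 : ℝ), l ^ (Q - 1) * (Real.exp (-t * l) * ρ t) =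
      Real.Gamma Q * ((1 / t) ^ Q * ρ t) := by
  have := Real.integral_rpow_mul_exp_neg_mul_Ioi hQ ht
  simp_rw [← mul_assoc, neg_mul, integral_mul_const, this]
  ring

/-- The moment of order `-Q`. -/
theorem negative_moment (h : IsStableDensity β τ ρ) (hβ : 0 < β) (hτ : 0 < τ) {Q : ℝ}
    (hQ : 0 < Q) :
    IntegrableOn (fun t => (1 / t) ^ Q * ρ t) (Ioi 0) ∧
    ∫ t in Ioi (0 : ℝ), (1 / t) ^ Q * ρ t =
      τ ^ (-Q / β) * ((1 / β) * Real.Gamma (Q / β) / Real.Gamma Q) := by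
  have hG : 0 < Real.Gamma Q := Real.Gamma_pos_of_pos hQ
  have hint := h.integrable_prod hβ hτ hQ
  constructor
  · refine (hint.integral_prod_left.const_mul (Real.Gamma Q)⁻¹).congr ?_
    filter_upwards [ae_restrict_mem measurableSet_Ioi] with t ht
    simp only [Function.uncurry]
    rw [integral_rpow_mul_exp_neg_mul Q hQ ht]
    field_simp
  · have h1 := setIntegral_congr_fun (μ := volume) measurableSet_Ioi
      fun t (ht : 0 < t) => integral_rpow_mul_exp_neg_mul (ρ := ρ) Q hQ ht
    have h2 : ∀ l ∈ Ioi (0 : ℝ), ∫ t in Ioi (0 : ℝ), l ^ (Q - 1) * (Real.exp (-t * l) * ρ t) =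
        l ^ (Q - 1) * Real.exp (-τ * l ^ β) := fun l hl => by
      rw [integral_const_mul, h.2.2 l (le_of_lt hl)]
    rw [integral_integral_swap hint, setIntegral_congr_fun measurableSet_Ioi h2,
      integral_rpow_mul_exp_neg_mul_rpow hβ (by linarith) hτ, integral_const_mul,
      sub_add_cancel] at h1
    rw [← mul_div_assoc, eq_div_iff hG.ne', ← mul_assoc, h1, mul_comm]

end IsStableDensity

theorem half_le_one_sub_exp_neg {x : ℝ} (h0 : 0 ≤ x) (h1 : x ≤ 1) :
    x / 2 ≤ 1 - Real.exp (-x) := by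
  have h := Real.add_one_le_exp x
  have h2 : Real.exp (-x) ≤ 1 / (1 + x) := by
    rw [Real.exp_neg, ← one_div]
    gcongr
    linarith
  have h3 : 1 / (1 + x) ≤ 1 - x / 2 := by
    rw [div_le_iff₀ (by positivity)]
    nlinarith
  linarith

theorem one_le_two_mul_one_sub_exp_neg {x : ℝ} (h1 : 1 ≤ x) :
    1 ≤ 2 * (1 - Real.exp (-x)) := by
  have h := half_le_one_sub_exp_neg zero_le_one le_rfl
  have h2 : Real.exp (-x) ≤ Real.exp (-1) := Real.exp_le_exp.2 (by linarith)
  linarith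

theorem exists_rpow_mul_exp_le_one_sub_exp_neg (Q : ℝ) :
    ∃ C : ℝ, 2 ≤ C ∧ ∀ x, 0 < x → x ≤ 1 →
      (1 / x) ^ Q * Real.exp (-(1 / (4 * x))) ≤ C * (1 - Real.exp (-x)) := by
  obtain ⟨n, hn⟩ := exists_nat_ge (Q + 1)
  refine ⟨2 * (4 ^ n * n.factorial), ?_, fun x hx hx1 => ?_⟩
  · have h1 : (1 : ℝ) ≤ 4 ^ n := one_le_pow₀ (by norm_num)
    have h2 : (1 : ℝ) ≤ n.factorial := by exact_mod_cast n.factorial_pos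
    nlinarith
  · have hy : 1 ≤ 1 / x := by rwa [le_div_iff₀ hx, one_mul]
    have h1 := Real.pow_div_factorial_le_exp (1 / (4 * x)) (by positivity) n
    have h2 : (1 / x) ^ Q ≤ x * (1 / x) ^ n := by
      have : (1 / x) ^ (Q + 1) ≤ (1 / x) ^ (n : ℝ) := Real.rpow_le_rpow_of_exponent_le hy hn
      rw [Real.rpow_natCast, Real.rpow_add_one (by positivity)] at this
      calc (1 / x) ^ Q = x * ((1 / x) ^ Q * (1 / x)) := by field_simp
        _ ≤ _ := by gcongr
    have h3 : (1 / x) ^ n = 4 ^ n * (1 / (4 * x)) ^ n := by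
      rw [← mul_pow]; congr 1; field_simp
    rw [div_le_iff₀ (by positivity)] at h1
    have h4 := half_le_one_sub_exp_neg hx.le hx1
    rw [Real.exp_neg]
    calc (1 / x) ^ Q * (Real.exp (1 / (4 * x)))⁻¹
        ≤ x * (4 ^ n * (Real.exp (1 / (4 * x)) * n.factorial)) *
          (Real.exp (1 / (4 * x)))⁻¹ := by
          gcongr
          refine h2.trans ?_
          rw [h3]
          gcongr
      _ = 2 * (4 ^ n * n.factorial) * (x / 2) := by field_simp
      _ ≤ _ := by gcongr

/-- Positive antitone functions on `(0, ∞)` that decay at most like `t ^ (-Q)`. -/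
structure IsSlowlyDecaying (Q : ℝ) (g : ℝ → ℝ) : Prop where
  pos : ∀ t, 0 < t → 0 < g t
  anti : AntitoneOn g (Ioi 0)
  growth : ∀ t t', 0 < t → t ≤ t' → g t ≤ (t' / t) ^ Q * g t'

theorem IsSlowlyDecaying.aestronglyMeasurable {Q D : ℝ} {g ρ : ℝ → ℝ} (hg : IsSlowlyDecaying Q g)
    (hρ : Measurable ρ) :
    AEStronglyMeasurable (fun t => g t * Real.exp (-(D / (4 * t))) * ρ t)
      (volume.restrict (Ioi 0)) := by
  have h1 := aemeasurable_restrict_of_antitoneOn (μ := volume) measurableSet_Ioi hg.anti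
  have h2 : Measurable fun t : ℝ => Real.exp (-(D / (4 * t))) := by fun_prop
  exact ((h1.mul h2.aemeasurable).mul hρ.aemeasurable).aestronglyMeasurable

/-- Domination of a nonnegative integrand on `(0, ∞)`. -/
theorem integrableOn_and_integral_le {f F : ℝ → ℝ}
    (hf : AEStronglyMeasurable f (volume.restrict (Ioi 0))) (hF : IntegrableOn F (Ioi 0))
    (h : ∀ t, 0 < t → 0 ≤ f t ∧ f t ≤ F t) :
    IntegrableOn f (Ioi 0) ∧ ∫ t in Ioi (0 : ℝ), f t ≤ ∫ t in Ioi (0 : ℝ), F t := by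
  have hi : IntegrableOn f (Ioi 0) := by
    refine hF.mono' hf ?_
    filter_upwards [ae_restrict_mem measurableSet_Ioi] with t ht
    rw [Real.norm_of_nonneg (h t ht).1]
    exact (h t ht).2
  exact ⟨hi, setIntegral_mono_on hi hF measurableSet_Ioi fun t ht => (h t ht).2⟩

theorem exists_subordinated_upper_bound {β Q : ℝ} (hβ : 0 < β) (hQ : 0 < Q) :
    ∃ C : ℝ, 0 < C ∧ ∀ (τ D : ℝ) (ρ g : ℝ → ℝ), 0 < τ → 0 ≤ D → IsStableDensity β τ ρ →
      IsSlowlyDecaying Q g →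
      IntegrableOn (fun t => g t * Real.exp (-(D / (4 * t))) * ρ t) (Ioi 0) ∧
      ∫ t in Ioi (0 : ℝ), g t * Real.exp (-(D / (4 * t))) * ρ t ≤
        C * (g (max D (τ ^ (1 / β))) * (τ * max D (τ ^ (1 / β)) ^ (-β))) := by
  obtain ⟨C₀, hC₀, hC⟩ := exists_rpow_mul_exp_le_one_sub_exp_neg Q
  have hG : 0 < Real.Gamma Q := Real.Gamma_pos_of_pos hQ
  have hG' : 0 < Real.Gamma (Q / β) := Real.Gamma_pos_of_pos (by positivity)
  set M := (1 / β) * Real.Gamma (Q / β) / Real.Gamma Q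
  have hM : 0 < M := by positivity
  refine ⟨C₀ + (1 + M), by positivity, fun τ D ρ g hτ hD hρ hg => ?_⟩
  have hT : 0 < τ ^ (1 / β) := by positivity
  set R := max D (τ ^ (1 / β))
  have hR : 0 < R := lt_max_of_lt_right hT
  have hgR := hg.pos R hR
  have hmeas := hg.aestronglyMeasurable (D := D) hρ.2.1
  rcases le_total (τ ^ (1 / β)) D with hTD | hTD
  · have hRD : R = D := max_eq_left hTD
    have hF := (hρ.integrableOn_one_sub_exp hR).const_mul (C₀ * g R)
    obtain ⟨hi, hle⟩ := integrableOn_and_integral_le hmeas hF fun t ht => by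
      have hgt := hg.pos t ht
      have hρt := hρ.1 t ht
      refine ⟨by positivity, ?_⟩
      rw [← mul_assoc]
      refine mul_le_mul_of_nonneg_right ?_ hρt
      rcases le_total t R with htR | htR
      · have h1 := hC (t / R) (by positivity) ((div_le_one hR).2 htR)
        have h2 := hg.growth t R ht htR
        rw [← hRD]
        calc g t * Real.exp (-(R / (4 * t)))
            ≤ (R / t) ^ Q * g R * Real.exp (-(R / (4 * t))) := by gcongr
          _ = g R * ((1 / (t / R)) ^ Q * Real.exp (-(1 / (4 * (t / R))))) := by
              rw [one_div_div, show 1 / (4 * (t / R)) = R / (4 * t) by field_simp]; ring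
          _ ≤ g R * (C₀ * (1 - Real.exp (-(t / R)))) := by gcongr
          _ = _ := by ring
      · have h1 := one_le_two_mul_one_sub_exp_neg ((one_le_div hR).2 htR)
        have h2 : g t ≤ g R := hg.anti hR ht htR
        have h3 : Real.exp (-(D / (4 * t))) ≤ 1 := Real.exp_le_one_iff.2 (by simp; positivity)
        calc g t * Real.exp (-(D / (4 * t))) ≤ g R * 1 := by gcongr
          _ ≤ g R * (C₀ * (1 - Real.exp (-(t / R)))) := by
              gcongr
              nlinarith
          _ = _ := by ring
    refine ⟨hi, hle.trans ?_⟩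
    rw [integral_const_mul, hρ.integral_one_sub_exp hβ hR]
    have h1 := Real.add_one_le_exp (-(τ * R ^ (-β)))
    have h2 : 0 < g R * (τ * R ^ (-β)) := by positivity
    calc C₀ * g R * (1 - Real.exp (-(τ * R ^ (-β)))) ≤ C₀ * g R * (τ * R ^ (-β)) := by
          gcongr
          linarith
      _ ≤ _ := by nlinarith
  · have hRT : R = τ ^ (1 / β) := max_eq_right hTD
    obtain ⟨hm, hmi⟩ := hρ.negative_moment hβ hτ hQ
    have hF := (hρ.integrableOn.add (hm.const_mul (R ^ Q))).const_mul (g R)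
    obtain ⟨hi, hle⟩ := integrableOn_and_integral_le hmeas hF fun t ht => by
      have hgt := hg.pos t ht
      have hρt := hρ.1 t ht
      refine ⟨by positivity, ?_⟩
      have h3 : Real.exp (-(D / (4 * t))) ≤ 1 := Real.exp_le_one_iff.2 (by simp; positivity)
      have h4 : g t ≤ g R * (1 + R ^ Q * (1 / t) ^ Q) := by
        rcases le_total t R with htR | htR
        · have h2 := hg.growth t R ht htR
          rw [← Real.mul_rpow hR.le (by positivity), mul_one_div]
          nlinarith
        · have h2 : g t ≤ g R := hg.anti hR ht htR
          have : 0 < g R * (R ^ Q * (1 / t) ^ Q) := by positivity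
          nlinarith
      calc g t * Real.exp (-(D / (4 * t))) * ρ t
          ≤ g R * (1 + R ^ Q * (1 / t) ^ Q) * 1 * ρ t := by gcongr
        _ = _ := by simp only [Pi.add_apply]; ring
    refine ⟨hi, hle.trans ?_⟩
    have h1 : ∫ t in Ioi (0 : ℝ), (ρ + fun t => R ^ Q * ((1 / t) ^ Q * ρ t)) t = 1 + M := by
      rw [integral_add' hρ.integrableOn (hm.const_mul _), integral_const_mul,
        hρ.integral_eq_one hβ, hmi, ← mul_assoc, hRT, ← Real.rpow_mul hτ.le,
        ← Real.rpow_add hτ, show 1 / β * Q + -Q / β = 0 by ring, Real.rpow_zero, one_mul]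
    have h2 : τ * R ^ (-β) = 1 := by
      rw [hRT, ← Real.rpow_mul hτ.le, show 1 / β * -β = -1 by field_simp, Real.rpow_neg_one,
        mul_inv_cancel₀ hτ.ne']
    rw [integral_const_mul, h1, h2]
    nlinarith

theorem exists_subordinated_lower_bound {β Q : ℝ} (hβ : 0 < β) (hβ1 : β < 1) (hQ : 0 < Q) :
    ∃ c : ℝ, 0 < c ∧ ∀ (τ D : ℝ) (ρ g : ℝ → ℝ), 0 < τ → 0 ≤ D → IsStableDensity β τ ρ →
      IsSlowlyDecaying Q g →
      c * (g (max D (τ ^ (1 / β))) * (τ * max D (τ ^ (1 / β)) ^ (-β))) ≤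
        ∫ t in Ioi (0 : ℝ), g t * Real.exp (-(D / (4 * t))) * ρ t := by
  obtain ⟨a, ha, ha'⟩ : ∃ a : ℝ, 0 < a ∧ a * a ^ (-β) = 1 / 16 := by
    refine ⟨(1 / 16) ^ (1 / (1 - β)), by positivity, ?_⟩
    have : 1 - β ≠ 0 := by linarith
    rw [← Real.rpow_one_add' (by positivity) (by linarith), ← Real.rpow_mul (by norm_num),
      show 1 / (1 - β) * (1 + -β) = 1 by field_simp; ring, Real.rpow_one]
  obtain ⟨b, hb, hb1, hb'⟩ : ∃ b : ℝ, 0 < b ∧ 1 ≤ b ∧ b ^ (-β) = 1 / 16 := by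
    refine ⟨16 ^ (1 / β), by positivity, Real.one_le_rpow (by norm_num) (by positivity), ?_⟩
    rw [← Real.rpow_mul (by norm_num), show 1 / β * -β = -1 by field_simp, Real.rpow_neg_one]
    norm_num
  set κ := b ^ (-Q) * Real.exp (-(1 / (4 * a)))
  have hκ : 0 < κ := by positivity
  refine ⟨κ / 4, by positivity, fun τ D ρ g hτ hD hρ hg => ?_⟩
  obtain ⟨C, -, hC⟩ := exists_subordinated_upper_bound hβ hQ
  have hi := (hC τ D ρ g hτ hD hρ hg).1
  have hT : 0 < τ ^ (1 / β) := by positivity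
  set R := max D (τ ^ (1 / β))
  have hR : 0 < R := lt_max_of_lt_right hT
  have hgR := hg.pos R hR
  have hy1 : τ * R ^ (-β) ≤ 1 := by
    have h1 : R ^ (-β) ≤ (τ ^ (1 / β)) ^ (-β) :=
      Real.rpow_le_rpow_of_nonpos hT (le_max_right _ _) (by linarith)
    rw [← Real.rpow_mul hτ.le, show 1 / β * -β = -1 by field_simp, Real.rpow_neg_one] at h1
    calc τ * R ^ (-β) ≤ τ * τ⁻¹ := by gcongr
      _ = 1 := mul_inv_cancel₀ hτ.ne'
  have hI := hρ.integrableOn_one_sub_exp hR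
  have hIa := (hρ.integrableOn_one_sub_exp (mul_pos ha hR)).const_mul (2 * a)
  have hIb := (hρ.integrableOn_one_sub_exp (mul_pos hb hR)).const_mul 2
  have hIc : IntegrableOn (fun t => (1 - Real.exp (-(t / R))) * ρ t -
      2 * a * ((1 - Real.exp (-(t / (a * R)))) * ρ t)) (Ioi 0) := hI.sub hIa
  have hle : ∫ t in Ioi (0 : ℝ), κ * g R * ((1 - Real.exp (-(t / R))) * ρ t -
      2 * a * ((1 - Real.exp (-(t / (a * R)))) * ρ t) -
      2 * ((1 - Real.exp (-(t / (b * R)))) * ρ t)) ≤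
      ∫ t in Ioi (0 : ℝ), g t * Real.exp (-(D / (4 * t))) * ρ t := by
    refine setIntegral_mono_on ((hIc.sub hIb).const_mul _) hi measurableSet_Ioi
      fun t (ht : 0 < t) => ?_
    have hgt := hg.pos t ht
    have hρt := hρ.1 t ht
    have hexp (x : ℝ) (hx : 0 ≤ x) : 0 ≤ 1 - Real.exp (-x) := by simpa using hx
    have e0 := hexp (t / R) (by positivity)
    have ea := hexp (t / (a * R)) (by positivity)
    have eb := hexp (t / (b * R)) (by positivity)
    have ep := Real.exp_pos (-(t / R))
    suffices h : κ * g R * ((1 - Real.exp (-(t / R))) - 2 * a * (1 - Real.exp (-(t / (a * R)))) -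
        2 * (1 - Real.exp (-(t / (b * R))))) ≤ g t * Real.exp (-(D / (4 * t))) by
      calc _ = _ * ρ t := by ring
        _ ≤ _ := mul_le_mul_of_nonneg_right h hρt
    have hκg : 0 < κ * g R := by positivity
    have hpos : 0 < g t * Real.exp (-(D / (4 * t))) := by positivity
    have hae := mul_nonneg ha.le ea
    rcases le_total t (a * R) with hta | hta
    · have h1 := half_le_one_sub_exp_neg (x := t / (a * R)) (by positivity)
        ((div_le_one (by positivity)).2 hta)
      have h2 : 1 - Real.exp (-(t / R)) ≤ t / R := by linarith [Real.add_one_le_exp (-(t / R))]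
      have h3 : t / R = 2 * a * (t / (a * R) / 2) := by field_simp
      refine le_trans (mul_nonpos_of_nonneg_of_nonpos hκg.le ?_) hpos.le
      nlinarith [mul_le_mul_of_nonneg_left h1 ha.le]
    rcases le_total (b * R) t with htb | htb
    · have h1 := one_le_two_mul_one_sub_exp_neg ((one_le_div (by positivity)).2 htb)
      refine le_trans (mul_nonpos_of_nonneg_of_nonpos hκg.le ?_) hpos.le
      nlinarith
    · have h1 : g R ≤ b ^ Q * g (b * R) := by
        have := hg.growth R (b * R) hR (le_mul_of_one_le_left hR.le hb1)
        rwa [mul_div_cancel_right₀ _ hR.ne'] at this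
      have h2 : g (b * R) ≤ g t := hg.anti ht (mul_pos hb hR) htb
      have h3 : Real.exp (-(1 / (4 * a))) ≤ Real.exp (-(D / (4 * t))) := by
        rw [Real.exp_le_exp, neg_le_neg_iff, div_le_div_iff₀ (by positivity) (by positivity)]
        nlinarith [le_max_left D (τ ^ (1 / β))]
      have h4 : b ^ (-Q) * g R ≤ g t := by
        rw [Real.rpow_neg hb.le, inv_mul_le_iff₀ (by positivity)]
        exact h1.trans (by gcongr)
      calc _ ≤ κ * g R * 1 := by
            gcongr
            nlinarith
        _ = b ^ (-Q) * g R * Real.exp (-(1 / (4 * a))) := by ring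
        _ ≤ _ := by gcongr
  refine le_trans ?_ hle
  rw [integral_const_mul, integral_sub hIc hIb, integral_sub hI hIa,
    integral_const_mul, integral_const_mul, hρ.integral_one_sub_exp hβ hR,
    hρ.integral_one_sub_exp hβ (mul_pos ha hR), hρ.integral_one_sub_exp hβ (mul_pos hb hR),
    Real.mul_rpow ha.le hR.le, Real.mul_rpow hb.le hR.le, hb']
  have hy0 : 0 < τ * R ^ (-β) := by positivity
  have h1 := half_le_one_sub_exp_neg hy0.le hy1
  have h2 := Real.add_one_le_exp (-(τ * (a ^ (-β) * R ^ (-β))))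
  have h3 := Real.add_one_le_exp (-(τ * (1 / 16 * R ^ (-β))))
  have h4 : a * (1 - Real.exp (-(τ * (a ^ (-β) * R ^ (-β))))) ≤ 1 / 16 * (τ * R ^ (-β)) := by
    rw [← ha']
    nlinarith
  calc κ / 4 * (g R * (τ * R ^ (-β))) = κ * g R * (τ * R ^ (-β) / 4) := by ring
    _ ≤ _ := by
      gcongr
      linarith

theorem IsSlowlyDecaying.mul_rpow_neg_le {Q β R R' K : ℝ} {g : ℝ → ℝ} (hg : IsSlowlyDecaying Q g)
    (hQ : 0 < Q) (hβ : 0 < β) (hR : 0 < R) (hR' : 0 < R') (hK : 1 ≤ K) (h : R ≤ K * R') :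
    g R' * R' ^ (-β) ≤ K ^ Q * K ^ β * (g R * R ^ (-β)) := by
  have hK0 : 0 < K := by linarith
  have hgR := hg.pos R hR
  have h1 : g R' ≤ K ^ Q * g R := by
    rcases le_total R' R with hle | hle
    · refine (hg.growth R' R hR' hle).trans ?_
      gcongr
      rwa [div_le_iff₀ hR']
    · exact (hg.anti hR hR' hle).trans
        (le_mul_of_one_le_left hgR.le (Real.one_le_rpow hK hQ.le))
  have h2 : R' ^ (-β) ≤ K ^ β * R ^ (-β) := by
    calc R' ^ (-β) = K ^ β * (K * R') ^ (-β) := by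
          rw [Real.mul_rpow hK0.le hR'.le, ← mul_assoc, ← Real.rpow_add hK0]
          simp
      _ ≤ K ^ β * R ^ (-β) :=
          mul_le_mul_of_nonneg_left (Real.rpow_le_rpow_of_nonpos hR h (by linarith))
            (by positivity)
  calc g R' * R' ^ (-β) ≤ (K ^ Q * g R) * (K ^ β * R ^ (-β)) := by gcongr
    _ = _ := by ring

/-- The Bessel heat kernel without its Gaussian factor; `m` is the product of the two space
variables. -/
noncomputable def heatFactor (a m t : ℝ) : ℝ :=
  2 * m ^ (-a) * scaledBessel a a (m / (4 * t))

theorem heatFactor_isSlowlyDecaying {a m : ℝ} (ha : 0 < a) (hm : 0 < m) :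
    IsSlowlyDecaying (a + 2 * (1 / a + 1)) (heatFactor a m) where
  pos t ht := by
    have := scaledBessel_pos ha a (by positivity : 0 < m / (4 * t))
    unfold heatFactor
    positivity
  anti t ht t' ht' h := by
    rw [mem_Ioi] at ht ht'
    unfold heatFactor
    gcongr
    exact scaledBessel_monotoneOn ha (mem_Ioi.2 (by positivity)) (mem_Ioi.2 (by positivity))
      (by gcongr)
  growth t t' ht h := by
    have ht' : 0 < t' := ht.trans_le h
    have hw : 0 < m / (4 * t) := by positivity
    have hw' : 0 < m / (4 * t') := by positivity
    have hle : m / (4 * t') ≤ m / (4 * t) := by gcongr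
    have h1 := scaledBessel_antitoneOn ha hw' hw hle
    have key (w : ℝ) (hw : 0 < w) : scaledBessel a a w =
        w ^ (a + 2 * (1 / a + 1)) * scaledBessel a (-(2 * (1 / a + 1))) w := by
      unfold scaledBessel
      rw [← mul_assoc (w ^ (a + _)), ← Real.rpow_add hw, add_neg_cancel_right]
    have hq : m / (4 * t) = t' / t * (m / (4 * t')) := by field_simp
    unfold heatFactor
    rw [key _ hw, key _ hw']
    calc _ ≤ 2 * m ^ (-a) * ((m / (4 * t)) ^ (a + 2 * (1 / a + 1)) *
          scaledBessel a (-(2 * (1 / a + 1))) (m / (4 * t'))) := by gcongr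
      _ = _ := by
        rw [hq, Real.mul_rpow (by positivity) hw'.le]
        ring

theorem heatFactor_mul {a m k t : ℝ} (hm : 0 < m) (hk : 0 < k) :
    heatFactor a (k * m) t = k ^ (-a) * heatFactor a m (t / k) := by
  unfold heatFactor
  rw [Real.mul_rpow hk.le hm.le, show k * m / (4 * t) = m / (4 * (t / k)) by field_simp]
  ring

theorem besselI_eq_rpow_mul_besselSeries (ν : ℝ) {x : ℝ} (hx : 0 < x) :
    besselI ν x = (x / 2) ^ ν * besselSeries (ν + 1) ((x / 2) ^ 2) := by
  unfold besselI besselSeries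
  rw [← tsum_mul_left]
  refine tsum_congr fun k => ?_
  have : (x / 2) ^ (2 * (k : ℝ) + ν) = (x / 2) ^ ν * ((x / 2) ^ 2) ^ k := by
    rw [add_comm, Real.rpow_add (by positivity), ← pow_mul, ← Real.rpow_natCast (x / 2) (2 * k)]
    push_cast
    rfl
  rw [this, mul_div_assoc, add_assoc]

theorem besselHeat_eq (ζ : ℝ) {t r s : ℝ} (ht : 0 < t) (hr : 0 < r) (hs : 0 < s) :
    besselHeat ζ t r s =
      heatFactor (ζ + 1 / 2) (r * s) t * Real.exp (-((r - s) ^ 2 / (4 * t))) := by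
  have hw : 0 < r * s / (4 * t) := by positivity
  have h1 : r * s / (2 * t) / 2 = r * s / (4 * t) := by field_simp; norm_num
  have h2 : Real.exp (-(r ^ 2 + s ^ 2) / (4 * t)) =
      Real.exp (-((r - s) ^ 2 / (4 * t))) * Real.exp (-(2 * (r * s / (4 * t)))) := by
    rw [← Real.exp_add]
    congr 1
    field_simp
    ring
  have h3 : (r * s) ^ ((1 : ℝ) / 2 - ζ) = (r * s) ^ (-(ζ + 1 / 2)) * (r * s) := by
    rw [← Real.rpow_add_one (by positivity)]
    ring_nf
  have h4 : (r * s / (4 * t)) ^ (ζ - 1 / 2) =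
      (r * s / (4 * t)) ^ (ζ + 1 / 2) / (r * s / (4 * t)) := by
    rw [← Real.rpow_sub_one hw.ne']
    ring_nf
  unfold besselHeat heatFactor scaledBessel
  rw [besselI_eq_rpow_mul_besselSeries _ (by positivity), h1, h2, h3, h4,
    show ζ - 1 / 2 + 1 = ζ + 1 / 2 by ring]
  field_simp
  norm_num

/-- Two-sided bounds for the subordinated kernel: up to constants it is the heat factor at the
time `R = max ((r - s)²) (τ ^ (1 / β))`, times the probability that the subordinator exceeds `R`. -/
theorem exists_subKernel_bounds {ζ α : ℝ} (hζ : -1 / 2 < ζ) (hα0 : 0 < α) (hα2 : α < 2) :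
    ∃ c C : ℝ, 0 < c ∧ 0 < C ∧ ∀ (σ : ℝ → ℝ → ℝ), IsStableSubordinatorDensity α σ →
      ∀ τ r s R : ℝ, 0 < τ → 0 < r → 0 < s → R = max ((r - s) ^ 2) (τ ^ (1 / (α / 2))) →
        c * (heatFactor (ζ + 1 / 2) (r * s) R * (τ * R ^ (-(α / 2)))) ≤ subKernel ζ σ τ r s ∧
        subKernel ζ σ τ r s ≤
          C * (heatFactor (ζ + 1 / 2) (r * s) R * (τ * R ^ (-(α / 2)))) := by
  have ha : 0 < ζ + 1 / 2 := by linarith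
  have hQ : 0 < ζ + 1 / 2 + 2 * (1 / (ζ + 1 / 2) + 1) := by positivity
  obtain ⟨C, hC, hC'⟩ := exists_subordinated_upper_bound (half_pos hα0) hQ
  obtain ⟨c, hc, hc'⟩ := exists_subordinated_lower_bound (half_pos hα0) (by linarith) hQ
  refine ⟨c, C, hc, hC, fun σ hσ τ r s R hτ hr hs hR => ?_⟩
  have hρ : IsStableDensity (α / 2) τ (σ τ) :=
    ⟨hσ.1 τ hτ, hσ.2.1 τ hτ, fun l hl => hσ.2.2 τ l hτ hl⟩
  have hg := heatFactor_isSlowlyDecaying ha (mul_pos hr hs)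
  have heq : subKernel ζ σ τ r s = ∫ t in Ioi (0 : ℝ),
      heatFactor (ζ + 1 / 2) (r * s) t * Real.exp (-((r - s) ^ 2 / (4 * t))) * σ τ t :=
    setIntegral_congr_fun measurableSet_Ioi fun t (ht : 0 < t) => by
      simp only [besselHeat_eq ζ ht hr hs]
  rw [heq, hR]
  exact ⟨hc' τ _ _ _ hτ (sq_nonneg _) hρ hg, (hC' τ _ _ _ hτ (sq_nonneg _) hρ hg).2⟩

theorem max_le_max_one_inv_mul {D T k : ℝ} (hD : 0 ≤ D) (hT : 0 ≤ T) (hk : 0 < k) :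
    max D T ≤ max 1 k⁻¹ * max D (k * T) := by
  refine max_le ?_ ?_
  · calc D = 1 * D := (one_mul D).symm
      _ ≤ _ := by gcongr <;> exact le_max_left _ _
  · calc T = k⁻¹ * (k * T) := (inv_mul_cancel_left₀ hk.ne' T).symm
      _ ≤ _ := by gcongr <;> exact le_max_right _ _

theorem exists_subKernel_upper_comparison {ζ α c : ℝ} (hζ : -1 / 2 < ζ) (hα0 : 0 < α)
    (hα2 : α < 2) (hc : 0 < c) :
    ∃ K : ℝ, 0 < K ∧ ∀ (σ : ℝ → ℝ → ℝ), IsStableSubordinatorDensity α σ →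
      ∀ τ z s : ℝ, 0 < τ → 0 < z → 0 < s →
        subKernel ζ σ τ (c * z) (c * s) ≤ K * subKernel ζ σ τ z s ∧
        subKernel ζ σ (c * τ) z s ≤ K * subKernel ζ σ τ z s := by
  obtain ⟨A, B, hA, hB, hAB⟩ := exists_subKernel_bounds hζ hα0 hα2
  have ha : 0 < ζ + 1 / 2 := by linarith
  have hQ : 0 < ζ + 1 / 2 + 2 * (1 / (ζ + 1 / 2) + 1) := by positivity
  set a := ζ + 1 / 2
  set Q := a + 2 * (1 / a + 1)
  have hβ : 0 < α / 2 := half_pos hα0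
  set β := α / 2
  set L₁ := max 1 ((c ^ 2)⁻¹)⁻¹
  set L₂ := max 1 (c ^ (1 / β))⁻¹
  have hL₁ : 1 ≤ L₁ := le_max_left _ _
  have hL₂ : 1 ≤ L₂ := le_max_left _ _
  set K₁ := B * ((c ^ 2) ^ (-a) * (c ^ 2) ^ (-β) * (L₁ ^ Q * L₁ ^ β))
  set K₂ := B * (c * (L₂ ^ Q * L₂ ^ β))
  have hK₁ : 0 < K₁ := by positivity
  have hK₂ : 0 < K₂ := by positivity
  refine ⟨max (K₁ / A) (K₂ / A), lt_max_of_lt_left (by positivity),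
    fun σ hσ τ z s hτ hz hs => ?_⟩
  have hg := heatFactor_isSlowlyDecaying ha (mul_pos hz hs)
  have hT : 0 < τ ^ (1 / β) := by positivity
  set D := (z - s) ^ 2 with hD
  have hD0 : 0 ≤ D := sq_nonneg _
  have hR : 0 < max D (τ ^ (1 / β)) := lt_max_of_lt_right hT
  have h0 := (hAB σ hσ τ z s _ hτ hz hs rfl).1
  rw [← hD] at h0
  set R := max D (τ ^ (1 / β))
  set X := heatFactor a (z * s) R * (τ * R ^ (-β))
  have hX : 0 < X := by
    have := hg.pos R hR
    positivity
  have hcompare (Y K : ℝ) (hK : 0 < K) (hle : K / A ≤ max (K₁ / A) (K₂ / A)) (hY : Y ≤ K * X) :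
      Y ≤ max (K₁ / A) (K₂ / A) * subKernel ζ σ τ z s := by
    have h1 : 0 < subKernel ζ σ τ z s := lt_of_lt_of_le (by positivity) h0
    calc Y ≤ K * X := hY
      _ = K / A * (A * X) := by field_simp
      _ ≤ _ := by gcongr
  constructor
  · refine hcompare _ K₁ hK₁ (le_max_left _ _) ?_
    have hc2 : 0 < c ^ 2 := by positivity
    have hT' : 0 < (c ^ 2)⁻¹ * τ ^ (1 / β) := by positivity
    have hR' : 0 < max D ((c ^ 2)⁻¹ * τ ^ (1 / β)) := lt_max_of_lt_right hT'
    have h1 := (hAB σ hσ τ (c * z) (c * s) (c ^ 2 * max D ((c ^ 2)⁻¹ * τ ^ (1 / β))) hτ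
      (by positivity) (by positivity) (by
        rw [mul_max_of_nonneg _ _ hc2.le, mul_inv_cancel_left₀ hc2.ne', hD]
        congr 1
        ring)).2
    have h2 := hg.mul_rpow_neg_le hQ hβ hR hR' hL₁
      (max_le_max_one_inv_mul hD0 hT.le (inv_pos.2 hc2))
    rw [show c * z * (c * s) = c ^ 2 * (z * s) by ring, heatFactor_mul (mul_pos hz hs) hc2,
      mul_div_cancel_left₀ _ hc2.ne', Real.mul_rpow hc2.le hR'.le] at h1
    set R' := max D ((c ^ 2)⁻¹ * τ ^ (1 / β))
    calc _ ≤ _ := h1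
      _ = B * ((c ^ 2) ^ (-a) * (c ^ 2) ^ (-β) * τ *
          (heatFactor a (z * s) R' * R' ^ (-β))) := by ring
      _ ≤ B * ((c ^ 2) ^ (-a) * (c ^ 2) ^ (-β) * τ *
          (L₁ ^ Q * L₁ ^ β * (heatFactor a (z * s) R * R ^ (-β)))) := by gcongr
      _ = K₁ * X := by ring
  · refine hcompare _ K₂ hK₂ (le_max_right _ _) ?_
    have hk : 0 < c ^ (1 / β) := by positivity
    have hR' : 0 < max D (c ^ (1 / β) * τ ^ (1 / β)) := lt_max_of_lt_right (by positivity)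
    have h1 := (hAB σ hσ (c * τ) z s (max D (c ^ (1 / β) * τ ^ (1 / β))) (by positivity) hz hs
      (by rw [Real.mul_rpow hc.le hτ.le])).2
    have h2 := hg.mul_rpow_neg_le hQ hβ hR hR' hL₂ (max_le_max_one_inv_mul hD0 hT.le hk)
    set R' := max D (c ^ (1 / β) * τ ^ (1 / β))
    calc _ ≤ _ := h1
      _ = B * (c * τ * (heatFactor a (z * s) R' * R' ^ (-β))) := by ring
      _ ≤ B * (c * τ * (L₂ ^ Q * L₂ ^ β * (heatFactor a (z * s) R * R ^ (-β)))) := by gcongr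
      _ = K₂ * X := by ring

theorem stmt15 (ζ α c : ℝ) (hζ : -1/2 < ζ) (hα0 : 0 < α) (hα2 : α < 2) (hc : 0 < c)
    (σ : ℝ → ℝ → ℝ) (hσ : IsStableSubordinatorDensity α σ) :
    ∃ K₁ K₂ : ℝ, 0 < K₁ ∧ 0 < K₂ ∧
      ∀ τ z s : ℝ, 0 < τ → 0 < z → 0 < s →
        (K₁ * subKernel ζ σ τ z s ≤ subKernel ζ σ τ (c * z) (c * s) ∧
          subKernel ζ σ τ (c * z) (c * s) ≤ K₂ * subKernel ζ σ τ z s) ∧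
        (K₁ * subKernel ζ σ τ z s ≤ subKernel ζ σ (c * τ) z s ∧
          subKernel ζ σ (c * τ) z s ≤ K₂ * subKernel ζ σ τ z s) := by
  obtain ⟨K, hK, h⟩ := exists_subKernel_upper_comparison hζ hα0 hα2 hc
  obtain ⟨L, hL, h'⟩ := exists_subKernel_upper_comparison hζ hα0 hα2 (inv_pos.2 hc)
  refine ⟨L⁻¹, K, inv_pos.2 hL, hK, fun τ z s hτ hz hs => ?_⟩
  have h1 := (h' σ hσ τ (c * z) (c * s) hτ (by positivity) (by positivity)).1
  have h2 := (h' σ hσ (c * τ) z s (by positivity) hz hs).2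
  simp only [inv_mul_cancel_left₀ hc.ne'] at h1 h2
  obtain ⟨h3, h4⟩ := h σ hσ τ z s hτ hz hs
  exact ⟨⟨(inv_mul_le_iff₀ hL).2 h1, h3⟩, (inv_mul_le_iff₀ hL).2 h2, h4⟩
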